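/- Let a, b, c be complex numbers such that (a+b−2)/2 is not a nonpositive integer, 2c is not a nonpositive integer, and Re(2c − a − b) > 3. Then ₃F₂(a, b, c; (a+b−2)/2, 2c+1; 1) = ₃F₂(a, b, c; (a+b−2)/2, 2c; 1) − (ab/((2c+1)(a+b−2))) · ₃F₂(a+1, b+1, c+1; (a+b)/2, 2c+2; 1). -/

import Mathlib

open scoped Nat

/-- The generalized hypergeometric series `₃F₂(a, b, c; d, e; 1)`, defined as
`∑ₙ (a)ₙ(b)ₙ(c)ₙ / ((d)ₙ(e)ₙ n!)` where `(α)ₙ` is the Pochhammer symbol. -/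
noncomputable def hyp3F2 (a b c d e : ℂ) : ℂ :=
  ∑' n : ℕ,
    ((ascPochhammer ℂ n).eval a * (ascPochhammer ℂ n).eval b * (ascPochhammer ℂ n).eval c) /
      ((ascPochhammer ℂ n).eval d * (ascPochhammer ℂ n).eval e * (n ! : ℂ))

/-!
Termwise, raising a lower parameter `e` by one changes the reciprocal Pochhammer symbol by
`1 / (e)ₙ - 1 / (e + 1)ₙ = n / (e)ₙ₊₁`. The factor `n` cancels against `n!` and kills the term
`n = 0`; after shifting the index, `(α)ₙ₊₁ = α (α + 1)ₙ` turns the difference of two series into a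
multiple of the series with all parameters raised. Convergence comes from Euler's limit
`nˢ n! / (s)ₙ₊₁ → Γ(s)`, which makes the terms `O(n ^ (Re(a + b + c - d - e) - 1))`.
-/

open Asymptotics Filter

section Pochhammer

theorem ascPochhammer_eval_eq_prod_range {R : Type*} [CommSemiring R] (n : ℕ) (s : R) :
    (ascPochhammer R n).eval s = ∏ j ∈ Finset.range n, (s + j) := by
  induction n with
  | zero => simp
  | succ n ih => rw [ascPochhammer_succ_eval, ih, Finset.prod_range_succ]

theorem ascPochhammer_succ_eval_left {R : Type*} [CommSemiring R] (n : ℕ) (s : R) :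
    (ascPochhammer R (n + 1)).eval s = s * (ascPochhammer R n).eval (s + 1) := by
  simp [ascPochhammer_succ_left, Polynomial.eval_comp]

theorem inv_ascPochhammer_eval_sub_inv_add_one {K : Type*} [Field K] {e : K} {n : ℕ}
    (he : e ≠ 0) (hen : e + n ≠ 0) :
    ((ascPochhammer K n).eval e)⁻¹ - ((ascPochhammer K n).eval (e + 1))⁻¹ =
      n / (ascPochhammer K (n + 1)).eval e := by
  have eval_add_one : (ascPochhammer K n).eval (e + 1) =
      (ascPochhammer K n).eval e * (e + n) / e := by
    rw [← ascPochhammer_succ_eval, ascPochhammer_succ_eval_left, mul_div_cancel_left₀ _ he]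
  rw [eval_add_one, ascPochhammer_succ_eval]
  field_simp
  ring

theorem add_one_ne_neg_natCast {R : Type*} [AddGroupWithOne R] {s : R}
    (hs : ∀ m : ℕ, s ≠ -m) (m : ℕ) : s + 1 ≠ -m := by
  intro h
  apply hs (m + 1)
  rw [eq_sub_of_add_eq h, add_comm m, Nat.cast_add, neg_add_rev, Nat.cast_one, sub_eq_add_neg]

theorem gammaSeq_eq_div_ascPochhammer (s : ℂ) (n : ℕ) :
    Complex.GammaSeq s n = (n : ℂ) ^ s * n ! / (ascPochhammer ℂ (n + 1)).eval s := by
  rw [Complex.GammaSeq, ascPochhammer_eval_eq_prod_range]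

theorem isTheta_ascPochhammer_succ_eval {s : ℂ} (hs : ∀ m : ℕ, s ≠ -m) :
    (fun n : ℕ ↦ (ascPochhammer ℂ (n + 1)).eval s) =Θ[atTop]
      fun n : ℕ ↦ (n : ℝ) ^ s.re * n ! := by
  have norm_euler : (fun n : ℕ ↦ ‖(n : ℂ) ^ s * (n ! : ℂ)‖) =ᶠ[atTop]
      fun n : ℕ ↦ (n : ℝ) ^ s.re * n ! := by
    filter_upwards [eventually_gt_atTop 0] with n hn
    rw [norm_mul, Complex.norm_natCast_cpow_of_pos hn, Complex.norm_natCast]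
  have euler_limit := (Complex.GammaSeq_tendsto_Gamma s).congr (gammaSeq_eq_div_ascPochhammer s)
  exact (isTheta_of_div_tendsto_nhds_ne_zero euler_limit (Complex.Gamma_ne_zero hs)).trans
    (.of_norm_eventuallyEq norm_euler)

theorem isBigO_ascPochhammer_succ_eval (s : ℂ) :
    (fun n : ℕ ↦ (ascPochhammer ℂ (n + 1)).eval s) =O[atTop]
      fun n : ℕ ↦ (n : ℝ) ^ s.re * n ! := by
  by_cases hs : ∀ m : ℕ, s ≠ -m
  · exact (isTheta_ascPochhammer_succ_eval hs).isBigO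
  · push Not at hs
    obtain ⟨m, rfl⟩ := hs
    have eventually_zero : (fun n : ℕ ↦ (ascPochhammer ℂ (n + 1)).eval (-m : ℂ)) =ᶠ[atTop] 0 := by
      filter_upwards [eventually_ge_atTop m] with n hn
      exact ascPochhammer_eval_neg_coe_nat_of_lt (Nat.lt_succ_of_le hn)
    exact eventually_zero.trans_isBigO (isBigO_zero _ _)

end Pochhammer

section Hypergeometric

/-- The `n`-th term `(a)ₙ(b)ₙ(c)ₙ / ((d)ₙ(e)ₙ n!)` of the series `₃F₂(a, b, c; d, e; 1)`. -/
noncomputable def hyp3F2Term (a b c d e : ℂ) (n : ℕ) : ℂ :=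
  ((ascPochhammer ℂ n).eval a * (ascPochhammer ℂ n).eval b * (ascPochhammer ℂ n).eval c) /
    ((ascPochhammer ℂ n).eval d * (ascPochhammer ℂ n).eval e * (n ! : ℂ))

variable (a b c : ℂ) {d e : ℂ}

theorem hyp3F2Term_zero (d e : ℂ) : hyp3F2Term a b c d e 0 = 1 := by
  simp [hyp3F2Term]

theorem isBigO_hyp3F2Term_succ (hd : ∀ m : ℕ, d ≠ -m) (he : ∀ m : ℕ, e ≠ -m) :
    (fun n : ℕ ↦ hyp3F2Term a b c d e (n + 1)) =O[atTop]
      fun n : ℕ ↦ (n : ℝ) ^ ((a + b + c - d - e).re - 1) := by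
  have factorial_succ_isTheta : (fun n : ℕ ↦ ((n + 1)! : ℂ)) =Θ[atTop]
      fun n : ℕ ↦ (n : ℝ) ^ (1 : ℝ) * n ! := by
    simpa only [ascPochhammer_eval_one, Complex.one_re] using
      isTheta_ascPochhammer_succ_eval (s := 1) fun m h ↦ by
        apply Nat.cast_add_one_ne_zero (R := ℂ) m
        rw [add_comm, h, neg_add_cancel]
  have numerator := ((isBigO_ascPochhammer_succ_eval a).mul
    (isBigO_ascPochhammer_succ_eval b)).mul (isBigO_ascPochhammer_succ_eval c)
  have denominator := ((isTheta_ascPochhammer_succ_eval hd).mul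
    (isTheta_ascPochhammer_succ_eval he)).mul factorial_succ_isTheta
  refine (numerator.mul denominator.inv.isBigO).congr' (.of_forall fun n ↦ rfl) ?_
  filter_upwards [eventually_gt_atTop 0] with n hn
  have hn' : (0 : ℝ) < n := Nat.cast_pos.2 hn
  simp only [Complex.add_re, Complex.sub_re, Real.rpow_add hn', Real.rpow_sub hn']
  field_simp

theorem hasSum_hyp3F2 (hd : ∀ m : ℕ, d ≠ -m) (he : ∀ m : ℕ, e ≠ -m)
    (hre : 0 < (d + e - a - b - c).re) :
    HasSum (hyp3F2Term a b c d e) (hyp3F2 a b c d e) := by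
  have exponent_lt : (a + b + c - d - e).re - 1 < -1 := by
    simp only [Complex.add_re, Complex.sub_re] at hre ⊢
    linarith
  have summable_succ : Summable fun n : ℕ ↦ hyp3F2Term a b c d e (n + 1) :=
    summable_of_isBigO_nat (Real.summable_nat_rpow.2 exponent_lt)
      (isBigO_hyp3F2Term_succ a b c hd he)
  exact ((summable_nat_add_iff 1).1 summable_succ).hasSum

theorem hyp3F2Term_succ_sub_add_one {n : ℕ} (he : e ≠ 0) (hen : e + (n + 1 : ℕ) ≠ 0) :
    hyp3F2Term a b c d e (n + 1) - hyp3F2Term a b c d (e + 1) (n + 1) =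
      a * b * c / (d * e * (e + 1)) *
        hyp3F2Term (a + 1) (b + 1) (c + 1) (d + 1) (e + 2) n := by
  have eval_e : (ascPochhammer ℂ (n + 1 + 1)).eval e =
      e * ((e + 1) * (ascPochhammer ℂ n).eval (e + 2)) := by
    rw [ascPochhammer_succ_eval_left, ascPochhammer_succ_eval_left, add_assoc,
      one_add_one_eq_two]
  have factorial_quotient : ((n + 1 : ℕ) : ℂ) / (n + 1)! = (n ! : ℂ)⁻¹ := by
    rw [Nat.factorial_succ, Nat.cast_mul,
      div_mul_cancel_left₀ (Nat.cast_ne_zero.2 n.succ_ne_zero)]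
  calc
    _ = (ascPochhammer ℂ (n + 1)).eval a * (ascPochhammer ℂ (n + 1)).eval b *
          (ascPochhammer ℂ (n + 1)).eval c / ((ascPochhammer ℂ (n + 1)).eval d * (n + 1)!) *
        (((ascPochhammer ℂ (n + 1)).eval e)⁻¹ - ((ascPochhammer ℂ (n + 1)).eval (e + 1))⁻¹) := by
      simp only [hyp3F2Term, div_eq_mul_inv, mul_inv]
      ring
    _ = a * b * c / (d * e * (e + 1)) *
        ((ascPochhammer ℂ n).eval (a + 1) * (ascPochhammer ℂ n).eval (b + 1) *
            (ascPochhammer ℂ n).eval (c + 1) /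
          ((ascPochhammer ℂ n).eval (d + 1) * (ascPochhammer ℂ n).eval (e + 2))) *
        ((n + 1 : ℕ) / (n + 1)!) := by
      rw [inv_ascPochhammer_eval_sub_inv_add_one he hen, eval_e]
      simp only [ascPochhammer_succ_eval_left n, div_eq_mul_inv, mul_inv]
      ring
    _ = _ := by
      rw [factorial_quotient, hyp3F2Term]
      simp only [div_eq_mul_inv, mul_inv]
      ring

end Hypergeometric

theorem watson_contiguous_9_general (a b c : ℂ) {d e : ℂ} (hd : ∀ m : ℕ, d ≠ -m)
    (he : ∀ m : ℕ, e ≠ -m) (hre : 0 < (d + e - a - b - c).re) :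
    hyp3F2 a b c d (e + 1) =
      hyp3F2 a b c d e -
        a * b * c / (d * e * (e + 1)) * hyp3F2 (a + 1) (b + 1) (c + 1) (d + 1) (e + 2) := by
  have hd₁ := add_one_ne_neg_natCast hd
  have he₁ := add_one_ne_neg_natCast he
  have he₂ : ∀ m : ℕ, e + 2 ≠ -m := by
    simpa only [add_assoc, one_add_one_eq_two] using add_one_ne_neg_natCast he₁
  have hre₁ : 0 < (d + (e + 1) - a - b - c).re := by
    simp only [Complex.add_re, Complex.sub_re, Complex.one_re] at hre ⊢
    linarith
  have hre_raised : 0 < (d + 1 + (e + 2) - (a + 1) - (b + 1) - (c + 1)).re := by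
    convert hre using 2
    ring
  have hasSum_difference := (hasSum_nat_add_iff' 1).2 <|
    (hasSum_hyp3F2 a b c hd he hre).sub (hasSum_hyp3F2 a b c hd he₁ hre₁)
  have hasSum_raised :=
    (hasSum_hyp3F2 (a + 1) (b + 1) (c + 1) hd₁ he₂ hre_raised).mul_left
      (a * b * c / (d * e * (e + 1)))
  have difference := hasSum_difference.unique <| hasSum_raised.congr_fun fun n ↦
    hyp3F2Term_succ_sub_add_one a b c (by simpa using he 0)
      fun h ↦ he (n + 1) (eq_neg_of_add_eq_zero_left h)
  simp only [Finset.sum_range_one, hyp3F2Term_zero, sub_self, sub_zero] at difference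
  rw [← difference, sub_sub_cancel]

theorem watson_contiguous_9 (a b c : ℂ)
    (hd : ∀ m : ℕ, (a + b - 2) / 2 ≠ -(m : ℂ))
    (he : ∀ m : ℕ, 2 * c ≠ -(m : ℂ))
    (hre : (2 * c - a - b).re > 3) :
    hyp3F2 a b c ((a + b - 2) / 2) (2 * c + 1) =
      hyp3F2 a b c ((a + b - 2) / 2) (2 * c) -
        a * b / ((2 * c + 1) * (a + b - 2)) *
          hyp3F2 (a + 1) (b + 1) (c + 1) ((a + b) / 2) (2 * c + 2) := by
  have c_ne_zero : c ≠ 0 := by simpa using he 0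
  convert watson_contiguous_9_general a b c hd he ?_ using 3
  · field_simp
  · ring_nf
  · rw [show (a + b - 2) / 2 + 2 * c - a - b - c = (2 * c - a - b - 2) / 2 by ring,
      Complex.div_ofNat_re, Complex.sub_re, Complex.re_ofNat]
    linarith
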